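/- If θ is an angle function for α, then for all (s, v): φ_ss(s,v) = (−v·f′(s) + f(s)·cos θ(s))·N(s) − v·(f(s)² + g(s)²)·C(s) + v·g′(s)·W(s), and φ_sv(s,v) = −f(s)·N(s) + g(s)·W(s). -/

import Mathlib

open RealInnerProductSpace

/-- Cross product on `EuclideanSpace ℝ (Fin 3)`. -/
noncomputable def cross3 (u v : EuclideanSpace ℝ (Fin 3)) : EuclideanSpace ℝ (Fin 3) :=
  (EuclideanSpace.equiv (Fin 3) ℝ).symm
    (crossProduct ((EuclideanSpace.equiv (Fin 3) ℝ) u) ((EuclideanSpace.equiv (Fin 3) ℝ) v))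

/-- Determinant of the 3×3 matrix whose rows are the given vectors. -/
noncomputable def det3 (u v w : EuclideanSpace ℝ (Fin 3)) : ℝ :=
  Matrix.det (Matrix.of ![(EuclideanSpace.equiv (Fin 3) ℝ) u,
    (EuclideanSpace.equiv (Fin 3) ℝ) v, (EuclideanSpace.equiv (Fin 3) ℝ) w])

/-! Both `T' = κN` and `B' = -τN` point along `N`. The frame `(C, W)` is `(-T, B)` rotated in its
own plane by the angle `θ`, whose rate is `g`, and the `N`-components `f cos θ`, `-f sin θ` of
`T'`, `B'` recombine to `-f` in `C'` and to `0` in `W'`. Hence `N' = fC`, `C' = -fN + gW`,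
`W' = -gC`, and differentiating `φ_s = T + vC'` once more gives `φ_ss`. This takes five derivatives
of `α`, since `g` involves four of them and is itself differentiated. -/

local notation "E3" => EuclideanSpace ℝ (Fin 3)

section CrossProduct

lemma inner_eq_dotProduct (u v : E3) : ⟪u, v⟫ = u.ofLp ⬝ᵥ v.ofLp := by
  rw [EuclideanSpace.inner_eq_star_dotProduct, star_trivial, dotProduct_comm]

lemma ofLp_cross3 (u v : E3) : (cross3 u v).ofLp = crossProduct u.ofLp v.ofLp := rfl

lemma inner_self_cross3 (u v : E3) : ⟪u, cross3 u v⟫ = 0 := by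
  rw [inner_eq_dotProduct, ofLp_cross3, dot_self_cross]

lemma inner_cross3_self (u v : E3) : ⟪v, cross3 u v⟫ = 0 := by
  rw [inner_eq_dotProduct, ofLp_cross3, dot_cross_self]

lemma inner_cross3_cross3 (u v w x : E3) :
    ⟪cross3 u v, cross3 w x⟫ = ⟪u, w⟫ * ⟪v, x⟫ - ⟪u, x⟫ * ⟪v, w⟫ := by
  simp only [inner_eq_dotProduct, ofLp_cross3, cross_dot_cross]

lemma cross3_self (u : E3) : cross3 u u = 0 := by
  ext1
  rw [ofLp_cross3, cross_self, WithLp.ofLp_zero]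

lemma cross3_cross3 (u v w : E3) : cross3 u (cross3 v w) = ⟪u, w⟫ • v - ⟪v, u⟫ • w := by
  ext1
  simp only [inner_eq_dotProduct, ofLp_cross3, cross_cross_eq_smul_sub_smul', WithLp.ofLp_sub,
    WithLp.ofLp_smul]

lemma isBilinearMap_cross3 : IsBilinearMap ℝ cross3 where
  add_left u v w := by simp [cross3]
  smul_left c u v := by simp [cross3]
  add_right u v w := by simp [cross3]
  smul_right c u v := by simp [cross3]

lemma hasDerivAt_cross3 {u v : ℝ → E3} {u' v' : E3} {s : ℝ} (hu : HasDerivAt u u' s)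
    (hv : HasDerivAt v v' s) :
    HasDerivAt (fun t => cross3 (u t) (v t)) (cross3 (u s) v' + cross3 u' (v s)) s :=
  isBilinearMap_cross3.toContinuousBilinearMap.hasDerivAt_of_bilinear (fun _ => hu) fun _ => hv

lemma contDiff_cross3 {n : WithTop ℕ∞} {u v : ℝ → E3} (hu : ContDiff ℝ n u)
    (hv : ContDiff ℝ n v) : ContDiff ℝ n fun t => cross3 (u t) (v t) :=
  isBilinearMap_cross3.toContinuousBilinearMap.isBoundedBilinearMap.contDiff.comp₂ hu hv

lemma orthonormal_cross3 {u v : E3} (hu : ‖u‖ = 1) (hv : ‖v‖ = 1) (huv : ⟪u, v⟫ = 0) :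
    Orthonormal ℝ ![u, v, cross3 u v] := by
  have norm_cross3 : ‖cross3 u v‖ = 1 := by
    rw [← sq_eq_sq₀ (norm_nonneg _) zero_le_one, ← real_inner_self_eq_norm_sq,
      inner_cross3_cross3, huv, real_inner_self_eq_norm_sq, real_inner_self_eq_norm_sq, hu, hv]
    norm_num
  simp [orthonormal_vecCons_iff, Fin.forall_fin_two, hu, hv, huv, norm_cross3,
    inner_self_cross3, inner_cross3_self]

lemma eq_sum_inner_cross3_frame {u v : E3} (hu : ‖u‖ = 1) (hv : ‖v‖ = 1) (huv : ⟪u, v⟫ = 0)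
    (x : E3) : x = ⟪u, x⟫ • u + ⟪v, x⟫ • v + ⟪cross3 u v, x⟫ • cross3 u v := by
  have hframe := orthonormal_cross3 hu hv huv
  have hspan := hframe.linearIndependent.span_eq_top_of_card_eq_finrank' (by simp)
  simpa [Fin.sum_univ_three] using ((OrthonormalBasis.mk hframe hspan.ge).sum_repr' x).symm

end CrossProduct

lemma inner_deriv_eq_zero_of_norm_eq {E : Type*} [NormedAddCommGroup E] [InnerProductSpace ℝ E]
    {u : ℝ → E} {c : ℝ} (hu : ∀ t, ‖u t‖ = c) (s : ℝ) : ⟪u s, deriv u s⟫ = 0 := by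
  by_cases hdiff : DifferentiableAt ℝ u s
  · have hderiv : HasDerivAt (fun _ : ℝ => c ^ 2) (2 * ⟪u s, deriv u s⟫) s := by
      simpa only [hu] using hdiff.hasDerivAt.norm_sq
    linarith [hderiv.unique (hasDerivAt_const s (c ^ 2))]
  · rw [deriv_zero_of_not_differentiableAt hdiff, inner_zero_right]

section Rotation

variable {E : Type*} [NormedAddCommGroup E] [NormedSpace ℝ E] {T B : ℝ → E} {N : E} {θ : ℝ → ℝ}
  {f g s : ℝ}

lemma hasDerivAt_neg_cos_smul_add_sin_smul (hT : HasDerivAt T ((f * Real.cos (θ s)) • N) s)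
    (hB : HasDerivAt B (-(f * Real.sin (θ s)) • N) s) (hθ : HasDerivAt θ g s) :
    HasDerivAt (fun t => -Real.cos (θ t) • T t + Real.sin (θ t) • B t)
      (-f • N + g • (Real.sin (θ s) • T s + Real.cos (θ s) • B s)) s := by
  refine ((hθ.cos.fun_neg.smul hT).add (hθ.sin.smul hB)).congr_deriv ?_
  match_scalars
  · linear_combination -f * Real.sin_sq_add_cos_sq (θ s)
  · ring
  · ring

lemma hasDerivAt_sin_smul_add_cos_smul (hT : HasDerivAt T ((f * Real.cos (θ s)) • N) s)
    (hB : HasDerivAt B (-(f * Real.sin (θ s)) • N) s) (hθ : HasDerivAt θ g s) :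
    HasDerivAt (fun t => Real.sin (θ t) • T t + Real.cos (θ t) • B t)
      (-g • (-Real.cos (θ s) • T s + Real.sin (θ s) • B s)) s := by
  refine ((hθ.sin.smul hT).add (hθ.cos.smul hB)).congr_deriv ?_
  match_scalars <;> ring

end Rotation

namespace Curve

section InnerProductSpace

variable {E : Type*} [NormedAddCommGroup E] [InnerProductSpace ℝ E]

/-- The curvature `κ` of a curve parametrized by arc length. -/
noncomputable def curvature (α : ℝ → E) (s : ℝ) : ℝ := ‖deriv (deriv α) s‖

/-- The principal normal `N` of a curve parametrized by arc length; it is `0` where the curvature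
vanishes. -/
noncomputable def normal (α : ℝ → E) (s : ℝ) : E := (curvature α s)⁻¹ • deriv (deriv α) s

variable {α : ℝ → E} {n : WithTop ℕ∞} {s : ℝ}

lemma curvature_smul_normal (α : ℝ → E) (s : ℝ) :
    curvature α s • normal α s = deriv (deriv α) s := by
  by_cases h : deriv (deriv α) s = 0
  · simp [normal, h]
  · exact smul_inv_smul₀ (norm_ne_zero_iff.2 h) _

lemma norm_normal (hκ : curvature α s ≠ 0) : ‖normal α s‖ = 1 :=
  norm_smul_inv_norm (norm_ne_zero_iff.1 hκ)

lemma inner_deriv_normal (hunit : ∀ s, ‖deriv α s‖ = 1) (s : ℝ) :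
    ⟪deriv α s, normal α s⟫ = 0 := by
  rw [normal, real_inner_smul_right, inner_deriv_eq_zero_of_norm_eq hunit, mul_zero]

lemma hasDerivAt_deriv (hα : ContDiff ℝ 2 α) (s : ℝ) :
    HasDerivAt (deriv α) (curvature α s • normal α s) s :=
  curvature_smul_normal α s ▸ (hα.differentiable_deriv_two s).hasDerivAt

lemma contDiff_deriv_deriv (hα : ContDiff ℝ (n + 2) α) : ContDiff ℝ n (deriv (deriv α)) :=
  (hα.of_le (by rw [add_assoc, one_add_one_eq_two])).deriv'.deriv'

lemma contDiff_curvature (hα : ContDiff ℝ (n + 2) α) (hκ : ∀ s, curvature α s ≠ 0) :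
    ContDiff ℝ n (curvature α) :=
  (contDiff_deriv_deriv hα).norm ℝ fun s => norm_ne_zero_iff.1 (hκ s)

lemma contDiff_normal (hα : ContDiff ℝ (n + 2) α) (hκ : ∀ s, curvature α s ≠ 0) :
    ContDiff ℝ n (normal α) :=
  ((contDiff_curvature hα hκ).inv hκ).smul (contDiff_deriv_deriv hα)

lemma differentiable_normal (hα : ContDiff ℝ 3 α) (hκ : ∀ s, curvature α s ≠ 0) :
    Differentiable ℝ (normal α) :=
  (contDiff_normal (n := 1) (hα.of_le (by norm_num)) hκ).differentiable one_ne_zero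

lemma inner_deriv_deriv_normal (hα : ContDiff ℝ 3 α) (hunit : ∀ s, ‖deriv α s‖ = 1)
    (hκ : ∀ s, curvature α s ≠ 0) (s : ℝ) : ⟪deriv α s, deriv (normal α) s⟫ = -curvature α s := by
  have hsum : ⟪deriv α s, deriv (normal α) s⟫ + ⟪curvature α s • normal α s, normal α s⟫ = 0 := by
    refine ((hasDerivAt_deriv (hα.of_le (by norm_num)) s).inner ℝ
      (differentiable_normal hα hκ s).hasDerivAt).unique ?_
    simpa only [inner_deriv_normal hunit] using hasDerivAt_const s (0 : ℝ)
  rw [real_inner_smul_left, real_inner_self_eq_norm_sq, norm_normal (hκ s)] at hsum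
  linarith

end InnerProductSpace

/-- The binormal `B = T × N` of a curve parametrized by arc length. -/
noncomputable def binormal (α : ℝ → E3) (s : ℝ) : E3 := cross3 (deriv α s) (normal α s)

/-- The torsion `τ` of a curve parametrized by arc length, with the sign convention
`N' = -κT + τB`. -/
noncomputable def torsion (α : ℝ → E3) (s : ℝ) : ℝ := ⟪deriv (normal α) s, binormal α s⟫

/-- The alternative curvature `f` of a curve: the speed of its principal normal. -/
noncomputable def altCurvatureF (α : ℝ → E3) (s : ℝ) : ℝ :=
  √(curvature α s ^ 2 + torsion α s ^ 2)

/-- The alternative curvature `g` of a curve: the rate at which the alternative frame turns around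
the principal normal, relative to the Frenet frame. -/
noncomputable def altCurvatureG (α : ℝ → E3) (s : ℝ) : ℝ :=
  curvature α s ^ 2 / (curvature α s ^ 2 + torsion α s ^ 2) *
    deriv (fun u => torsion α u / curvature α u) s

/-- The vector `C` of the alternative moving frame: the direction of `N'`. -/
noncomputable def altFrameC (α : ℝ → E3) (s : ℝ) : E3 :=
  (√(curvature α s ^ 2 + torsion α s ^ 2))⁻¹ •
    (-curvature α s • deriv α s + torsion α s • binormal α s)

/-- The vector `W` of the alternative moving frame: the direction of the Darboux vector. -/
noncomputable def altFrameW (α : ℝ → E3) (s : ℝ) : E3 :=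
  (√(curvature α s ^ 2 + torsion α s ^ 2))⁻¹ •
    (torsion α s • deriv α s + curvature α s • binormal α s)

/-- `θ` is an angle function for `α`: the polar angle of the point `(κ, τ)`, whose polar radius is
`f`. -/
structure IsAngleFunction (α : ℝ → E3) (θ : ℝ → ℝ) : Prop where
  differentiable : Differentiable ℝ θ
  deriv_eq : ∀ s, deriv θ s = altCurvatureG α s
  curvature_eq : ∀ s, curvature α s = altCurvatureF α s * Real.cos (θ s)
  torsion_eq : ∀ s, torsion α s = altCurvatureF α s * Real.sin (θ s)

variable {α : ℝ → E3} {θ : ℝ → ℝ} {n : WithTop ℕ∞}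

section Regularity

lemma contDiff_torsion (hα : ContDiff ℝ (n + 3) α) (hκ : ∀ s, curvature α s ≠ 0) :
    ContDiff ℝ n (torsion α) := by
  have hα' : ContDiff ℝ (n + 1 + 2) α := hα.of_le (by rw [add_assoc]; norm_num)
  have hN : ContDiff ℝ (n + 1) (normal α) := contDiff_normal hα' hκ
  have hT : ContDiff ℝ n (deriv α) := (hα.of_le (by gcongr; norm_num)).deriv'
  exact hN.deriv'.inner ℝ (contDiff_cross3 hT (hN.of_le le_self_add))

lemma contDiff_altCurvatureF (hα : ContDiff ℝ (n + 3) α) (hκ : ∀ s, curvature α s ≠ 0) :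
    ContDiff ℝ n (altCurvatureF α) := by
  have hcurv : ContDiff ℝ n (curvature α) :=
    contDiff_curvature (hα.of_le (by gcongr; norm_num)) hκ
  refine ((hcurv.pow 2).add ((contDiff_torsion hα hκ).pow 2)).sqrt fun s => ?_
  have := hκ s
  positivity

lemma contDiff_altCurvatureG (hα : ContDiff ℝ (n + 4) α) (hκ : ∀ s, curvature α s ≠ 0) :
    ContDiff ℝ n (altCurvatureG α) := by
  have hα' : ContDiff ℝ (n + 1 + 3) α := hα.of_le (by rw [add_assoc]; norm_num)
  have hcurv : ContDiff ℝ (n + 1) (curvature α) :=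
    contDiff_curvature (hα'.of_le (by gcongr; norm_num)) hκ
  have htors : ContDiff ℝ (n + 1) (torsion α) := contDiff_torsion hα' hκ
  have hsq : ContDiff ℝ n fun s => curvature α s ^ 2 := (hcurv.of_le le_self_add).pow 2
  refine (hsq.div (hsq.add ((htors.of_le le_self_add).pow 2)) fun s => ?_).mul
    (htors.div hcurv hκ).deriv'
  have := hκ s
  positivity

end Regularity

section FrenetEquations

lemma deriv_normal (hα : ContDiff ℝ 3 α) (hunit : ∀ s, ‖deriv α s‖ = 1)
    (hκ : ∀ s, curvature α s ≠ 0) (s : ℝ) :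
    deriv (normal α) s = -curvature α s • deriv α s + torsion α s • binormal α s := by
  have hexpand := eq_sum_inner_cross3_frame (hunit s) (norm_normal (hκ s))
    (inner_deriv_normal hunit s) (deriv (normal α) s)
  rwa [inner_deriv_deriv_normal hα hunit hκ,
    inner_deriv_eq_zero_of_norm_eq fun t => norm_normal (hκ t), zero_smul, add_zero,
    real_inner_comm] at hexpand

lemma hasDerivAt_binormal (hα : ContDiff ℝ 3 α) (hunit : ∀ s, ‖deriv α s‖ = 1)
    (hκ : ∀ s, curvature α s ≠ 0) (s : ℝ) :
    HasDerivAt (binormal α) (-torsion α s • normal α s) s := by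
  refine (hasDerivAt_cross3 (hasDerivAt_deriv (hα.of_le (by norm_num)) s)
    (differentiable_normal hα hκ s).hasDerivAt).congr_deriv ?_
  rw [deriv_normal hα hunit hκ, isBilinearMap_cross3.add_right, isBilinearMap_cross3.smul_right,
    isBilinearMap_cross3.smul_right, isBilinearMap_cross3.smul_left, cross3_self, cross3_self,
    binormal, cross3_cross3, inner_deriv_normal hunit, real_inner_self_eq_norm_sq, hunit]
  module

end FrenetEquations

namespace IsAngleFunction

lemma hasDerivAt (hθ : IsAngleFunction α θ) (s : ℝ) : HasDerivAt θ (altCurvatureG α s) s :=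
  hθ.deriv_eq s ▸ (hθ.differentiable s).hasDerivAt

lemma altCurvatureF_ne_zero (hθ : IsAngleFunction α θ) {s : ℝ} (hκ : curvature α s ≠ 0) :
    altCurvatureF α s ≠ 0 :=
  left_ne_zero_of_mul (hθ.curvature_eq s ▸ hκ)

lemma altFrameC_eq (hθ : IsAngleFunction α θ) (hκ : ∀ s, curvature α s ≠ 0) :
    altFrameC α = fun s => -Real.cos (θ s) • deriv α s + Real.sin (θ s) • binormal α s := by
  funext s
  have hf := hθ.altCurvatureF_ne_zero (hκ s)
  rw [altFrameC, ← altCurvatureF, hθ.curvature_eq, hθ.torsion_eq]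
  match_scalars <;> field_simp

lemma altFrameW_eq (hθ : IsAngleFunction α θ) (hκ : ∀ s, curvature α s ≠ 0) :
    altFrameW α = fun s => Real.sin (θ s) • deriv α s + Real.cos (θ s) • binormal α s := by
  funext s
  have hf := hθ.altCurvatureF_ne_zero (hκ s)
  rw [altFrameW, ← altCurvatureF, hθ.curvature_eq, hθ.torsion_eq]
  match_scalars <;> field_simp

section MovingFrame

variable (hθ : IsAngleFunction α θ) (hα : ContDiff ℝ 3 α) (hunit : ∀ s, ‖deriv α s‖ = 1)
  (hκ : ∀ s, curvature α s ≠ 0) (s : ℝ)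
include hθ hα hunit hκ

lemma hasDerivAt_normal : HasDerivAt (normal α) (altCurvatureF α s • altFrameC α s) s := by
  refine (differentiable_normal hα hκ s).hasDerivAt.congr_deriv ?_
  rw [deriv_normal hα hunit hκ, hθ.altFrameC_eq hκ, hθ.curvature_eq, hθ.torsion_eq]
  module

lemma hasDerivAt_altFrameC : HasDerivAt (altFrameC α)
    (-altCurvatureF α s • normal α s + altCurvatureG α s • altFrameW α s) s := by
  rw [hθ.altFrameC_eq hκ, hθ.altFrameW_eq hκ]
  refine hasDerivAt_neg_cos_smul_add_sin_smul ?_ ?_ (hθ.hasDerivAt s)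
  · exact hθ.curvature_eq s ▸ hasDerivAt_deriv (hα.of_le (by norm_num)) s
  · exact hθ.torsion_eq s ▸ hasDerivAt_binormal hα hunit hκ s

lemma hasDerivAt_altFrameW :
    HasDerivAt (altFrameW α) (-altCurvatureG α s • altFrameC α s) s := by
  rw [hθ.altFrameC_eq hκ, hθ.altFrameW_eq hκ]
  refine hasDerivAt_sin_smul_add_cos_smul (N := normal α s) (f := altCurvatureF α s) ?_ ?_
    (hθ.hasDerivAt s)
  · exact hθ.curvature_eq s ▸ hasDerivAt_deriv (hα.of_le (by norm_num)) s
  · exact hθ.torsion_eq s ▸ hasDerivAt_binormal hα hunit hκ s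

end MovingFrame

lemma hasDerivAt_deriv_altFrameC (hθ : IsAngleFunction α θ) (hα : ContDiff ℝ 5 α)
    (hunit : ∀ s, ‖deriv α s‖ = 1) (hκ : ∀ s, curvature α s ≠ 0) (s : ℝ) :
    HasDerivAt (deriv (altFrameC α)) (-deriv (altCurvatureF α) s • normal α s
      - (altCurvatureF α s ^ 2 + altCurvatureG α s ^ 2) • altFrameC α s
      + deriv (altCurvatureG α) s • altFrameW α s) s := by
  have hα₃ : ContDiff ℝ 3 α := hα.of_le (by norm_num)
  have hf : Differentiable ℝ (altCurvatureF α) :=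
    (contDiff_altCurvatureF (n := 1) (hα.of_le (by norm_num)) hκ).differentiable one_ne_zero
  have hg : Differentiable ℝ (altCurvatureG α) :=
    (contDiff_altCurvatureG (n := 1) (hα.of_le (by norm_num)) hκ).differentiable one_ne_zero
  rw [funext fun t => (hθ.hasDerivAt_altFrameC hα₃ hunit hκ t).deriv]
  refine (((hf s).hasDerivAt.fun_neg.smul (hθ.hasDerivAt_normal hα₃ hunit hκ s)).add
    ((hg s).hasDerivAt.smul (hθ.hasDerivAt_altFrameW hα₃ hunit hκ s))).congr_deriv ?_
  module

end IsAngleFunction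

end Curve

open Curve in
theorem stmt_9_general {α : ℝ → E3} (hα : ContDiff ℝ 5 α) (hunit : ∀ s, ‖deriv α s‖ = 1)
    (hκ : ∀ s, curvature α s ≠ 0) {θ : ℝ → ℝ} (hθ : IsAngleFunction α θ) (s v : ℝ) :
    deriv (fun u => deriv (fun t => α t + v • altFrameC α t) u) s =
        (-(v * deriv (altCurvatureF α) s) + altCurvatureF α s * Real.cos (θ s)) • normal α s +
          (-(v * (altCurvatureF α s ^ 2 + altCurvatureG α s ^ 2))) • altFrameC α s +
          (v * deriv (altCurvatureG α) s) • altFrameW α s ∧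
      deriv (fun u => deriv (fun w => α u + w • altFrameC α u) v) s =
        (-altCurvatureF α s) • normal α s + altCurvatureG α s • altFrameW α s := by
  have hC := hθ.hasDerivAt_altFrameC (hα.of_le (by norm_num)) hunit hκ
  constructor
  · have hφs (u : ℝ) :
        deriv (fun t => α t + v • altFrameC α t) u = deriv α u + v • deriv (altFrameC α) u :=
      ((hα.differentiable (by norm_num) u).hasDerivAt.add
        ((hC u).differentiableAt.hasDerivAt.const_smul v)).deriv
    simp only [hφs]
    refine ((hasDerivAt_deriv (hα.of_le (by norm_num)) s).add
      ((hθ.hasDerivAt_deriv_altFrameC hα hunit hκ s).const_smul v)).deriv.trans ?_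
    rw [← hθ.curvature_eq]
    module
  · have hφv (u : ℝ) : deriv (fun w => α u + w • altFrameC α u) v = altFrameC α u := by
      simpa using (((hasDerivAt_id v).smul_const (altFrameC α u)).const_add (α u)).deriv
    simp only [hφv, (hC s).deriv]

theorem stmt_9
    (α : ℝ → EuclideanSpace ℝ (Fin 3))
    (hα : ContDiff ℝ (⊤ : ℕ∞) α)
    (hunit : ∀ s, ‖deriv α s‖ = 1)
    (T : ℝ → EuclideanSpace ℝ (Fin 3)) (hT : ∀ s, T s = deriv α s)
    (κ : ℝ → ℝ) (hκ : ∀ s, κ s = ‖deriv (deriv α) s‖) (hκpos : ∀ s, 0 < κ s)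
    (N : ℝ → EuclideanSpace ℝ (Fin 3)) (hN : ∀ s, N s = (κ s)⁻¹ • deriv (deriv α) s)
    (B : ℝ → EuclideanSpace ℝ (Fin 3)) (hB : ∀ s, B s = cross3 (T s) (N s))
    (τ : ℝ → ℝ) (hτ : ∀ s, τ s = ⟪deriv N s, B s⟫)
    (f : ℝ → ℝ) (hf : ∀ s, f s = Real.sqrt (κ s ^ 2 + τ s ^ 2))
    (g : ℝ → ℝ) (hg : ∀ s, g s = κ s ^ 2 / (κ s ^ 2 + τ s ^ 2) * deriv (fun u => τ u / κ u) s)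
    (C : ℝ → EuclideanSpace ℝ (Fin 3))
    (hC : ∀ s, C s = (Real.sqrt (κ s ^ 2 + τ s ^ 2))⁻¹ • ((-κ s) • T s + τ s • B s))
    (W : ℝ → EuclideanSpace ℝ (Fin 3))
    (hW : ∀ s, W s = (Real.sqrt (κ s ^ 2 + τ s ^ 2))⁻¹ • (τ s • T s + κ s • B s))
    (θ : ℝ → ℝ) (hθdiff : Differentiable ℝ θ)
    (hθderiv : ∀ s, deriv θ s = g s)
    (hθκ : ∀ s, κ s = f s * Real.cos (θ s))
    (hθτ : ∀ s, τ s = f s * Real.sin (θ s))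
    (φs φv : ℝ → ℝ → EuclideanSpace ℝ (Fin 3))
    (hφs : ∀ s v, φs s v = deriv (fun u => α u + v • C u) s)
    (hφv : ∀ s v, φv s v = deriv (fun w => α s + w • C s) v)
    (φss φsv φvv : ℝ → ℝ → EuclideanSpace ℝ (Fin 3))
    (hφss : ∀ s v, φss s v = deriv (fun u => φs u v) s)
    (hφsv : ∀ s v, φsv s v = deriv (fun u => φv u v) s)
    (hφvv : ∀ s v, φvv s v = deriv (fun w => φv s w) v) :
    ∀ (s v : ℝ),
      φss s v = (-(v * deriv f s) + f s * Real.cos (θ s)) • N s +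
        (-(v * (f s ^ 2 + g s ^ 2))) • C s + (v * deriv g s) • W s ∧
      φsv s v = (-f s) • N s + g s • W s := by
  obtain rfl : T = deriv α := funext hT
  obtain rfl : κ = Curve.curvature α := funext hκ
  obtain rfl : N = Curve.normal α := funext hN
  obtain rfl : B = Curve.binormal α := funext hB
  obtain rfl : τ = Curve.torsion α := funext hτ
  obtain rfl : f = Curve.altCurvatureF α := funext hf
  obtain rfl : g = Curve.altCurvatureG α := funext hg
  obtain rfl : C = Curve.altFrameC α := funext hC
  obtain rfl : W = Curve.altFrameW α := funext hW
  simp only [hφss, hφsv, hφs, hφv]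
  exact stmt_9_general (contDiff_infty.1 hα 5) hunit (fun s => (hκpos s).ne')
    ⟨hθdiff, hθderiv, hθκ, hθτ⟩
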